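/- The set α = {(1/6,1/4), (5/6,1/4), (1/6,11/12), (5/6,11/12)} of the four centroids a(1),a(2),a(3),a(4) is an optimal set of four-means for P with quantization error V₄ = 7/288. -/

import Mathlib

open MeasureTheory ProbabilityTheory
open scoped ENNReal

noncomputable section

abbrev E2 : Type := EuclideanSpace ℝ (Fin 2)

/-- The point (a,b) of the Euclidean plane. -/
def pt (a b : ℝ) : E2 := (WithLp.equiv 2 (Fin 2 → ℝ)).symm ![a, b]

/-- The four generating similarities S₁,…,S₄ (indexed 0,…,3) of the Sierpiński carpet. -/
def S : Fin 4 → E2 → E2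
  | 0 => fun x => pt (x 0 / 3) (x 1 / 3)
  | 1 => fun x => pt (x 0 / 3 + 2/3) (x 1 / 3)
  | 2 => fun x => pt (x 0 / 3) (x 1 / 3 + 2/3)
  | 3 => fun x => pt (x 0 / 3 + 2/3) (x 1 / 3 + 2/3)

/-- The self-affinity equation P = (1/8)P∘S₁⁻¹ + (1/8)P∘S₂⁻¹ + (3/8)P∘S₃⁻¹ + (3/8)P∘S₄⁻¹. -/
def carpetEq (P : Measure E2) : Prop :=
  P = (1/8 : ℝ≥0∞) • P.map (S 0) + (1/8 : ℝ≥0∞) • P.map (S 1)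
    + (3/8 : ℝ≥0∞) • P.map (S 2) + (3/8 : ℝ≥0∞) • P.map (S 3)

/-- The unit square [0,1]². -/
def unitSq : Set E2 := {x | ∀ i, x i ∈ Set.Icc (0:ℝ) 1}

/-- S_ω = S_{ω₁} ∘ ⋯ ∘ S_{ω_k} for a word ω. -/
def Sw (w : List (Fin 4)) : E2 → E2 := fun x => w.foldr S x

/-- The basic square J_ω = S_ω([0,1]²). -/
def Jw (w : List (Fin 4)) : Set E2 := Sw w '' unitSq

/-- The basic square J_i of the first level. -/
def Jset (i : Fin 4) : Set E2 := S i '' unitSq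

/-- The mass centroid (conditional expectation) of P on a set A. -/
def ctr (P : Measure E2) (A : Set E2) : E2 := (P A).toReal⁻¹ • ∫ x in A, x ∂P

/-- E(ω) : distortion error on J_ω about its centroid a(ω) = S_ω(1/2,3/4). -/
def Err (P : Measure E2) (w : List (Fin 4)) : ℝ :=
  ∫ x in Jw w, ‖x - Sw w (pt (1/2) (3/4))‖^2 ∂P

/-- E(ωi, ωj) : distortion error on J_{ωi} ∪ J_{ωj} about its centroid. -/
def Epair (P : Measure E2) (w : List (Fin 4)) (i j : Fin 4) : ℝ :=
  ∫ x in (Jw (w ++ [i]) ∪ Jw (w ++ [j])),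
    ‖x - ctr P (Jw (w ++ [i]) ∪ Jw (w ++ [j]))‖^2 ∂P

/-! ### Combinatorial part: a dual certificate for 4-means on the weighted 4 × 4 grid -/

/-- Sum of the dual values in a list of entries (weight, column, row, dual value). -/
def sumU : List (ℕ × ℕ × ℕ × ℕ) → ℕ
  | [] => 0
  | (_, _, _, u) :: l => u + sumU l

/-- Sum of positive parts of `u - w |x - c|²`. -/
def posSum (a b : ℝ) : List (ℕ × ℕ × ℕ × ℕ) → ℝ
  | [] => 0
  | (w, i, j, u) :: l => max 0 ((u : ℝ) - w * (((i : ℝ) - a)^2 + ((j : ℝ) - b)^2)) + posSum a b l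

/-- Branch and bound test. -/
def chk : List (ℕ × ℕ × ℕ × ℕ) → ℕ → ℕ → ℕ → ℕ → ℕ → Bool
  | [], m, mx, my, q, U =>
      (Nat.blt 0 m && Nat.ble (U * m + mx * mx + my * my) (m * (q + 28))) ||
      (Nat.beq m 0 && Nat.beq mx 0 && Nat.beq my 0 && Nat.ble U (q + 28))
  | (w, i, j, u) :: l, m, mx, my, q, U =>
      (Nat.blt 0 m && Nat.ble ((U + sumU ((w, i, j, u) :: l)) * m + mx * mx + my * my) (m * (q + 28))) ||
      (chk l (m + w) (mx + w * i) (my + w * j) (q + w * (i * i + j * j)) (U + u) &&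
       chk l m mx my q U)

lemma posSum_le (a b : ℝ) (l : List (ℕ × ℕ × ℕ × ℕ)) : posSum a b l ≤ sumU l := by
  induction l with
  | nil => simp [posSum, sumU]
  | cons p l ih =>
    obtain ⟨w, i, j, u⟩ := p
    simp only [posSum, sumU]
    push_cast
    have h : max 0 ((u : ℝ) - w * (((i : ℝ) - a)^2 + ((j : ℝ) - b)^2)) ≤ u := by
      apply max_le (by positivity)
      have : 0 ≤ (w : ℝ) * (((i : ℝ) - a)^2 + ((j : ℝ) - b)^2) := by positivity
      linarith
    linarith

lemma quad_bound {m mx my q U : ℕ} (a b : ℝ) (hm : 0 < m)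
    (h : U * m + mx * mx + my * my ≤ m * (q + 28)) :
    (U : ℝ) - q + 2 * mx * a + 2 * my * b - m * (a^2 + b^2) ≤ 28 := by
  have hm' : (0 : ℝ) < m := by exact_mod_cast hm
  have h' : (U : ℝ) * m + mx * mx + my * my ≤ m * (q + 28) := by exact_mod_cast h
  have : (m : ℝ) * ((U : ℝ) - q + 2 * mx * a + 2 * my * b - m * (a^2 + b^2)) ≤ m * 28 := by
    nlinarith [sq_nonneg ((m : ℝ) * a - mx), sq_nonneg ((m : ℝ) * b - my)]
  exact le_of_mul_le_mul_left this hm'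

lemma chk_sound (a b : ℝ) (l : List (ℕ × ℕ × ℕ × ℕ)) : ∀ (m mx my q U : ℕ),
    chk l m mx my q U = true →
    (U : ℝ) - q + 2 * mx * a + 2 * my * b - m * (a^2 + b^2) + posSum a b l ≤ 28 := by
  induction l with
  | nil =>
    intro m mx my q U h
    simp only [chk, Bool.or_eq_true, Bool.and_eq_true, Nat.blt_eq, Nat.ble_eq, Nat.beq_eq] at h
    simp only [posSum, add_zero]
    rcases h with ⟨hm, h⟩ | ⟨⟨⟨hm, hx⟩, hy⟩, h⟩
    · exact quad_bound a b hm h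
    · have h' : (U : ℝ) ≤ q + 28 := by exact_mod_cast h
      subst hm hx hy
      push_cast
      linarith
  | cons p l ih =>
    obtain ⟨w, i, j, u⟩ := p
    intro m mx my q U h
    simp only [chk, Bool.or_eq_true, Bool.and_eq_true, Nat.blt_eq, Nat.ble_eq] at h
    rcases h with ⟨hm, h⟩ | ⟨h1, h2⟩
    · have h3 := quad_bound a b hm h
      have h4 := posSum_le a b ((w, i, j, u) :: l)
      push_cast at h3
      linarith
    · have e1 := ih _ _ _ _ _ h1
      have e2 := ih _ _ _ _ _ h2
      simp only [posSum]
      rcases le_total 0 ((u : ℝ) - w * (((i : ℝ) - a)^2 + ((j : ℝ) - b)^2)) with hs | hs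
      · rw [max_eq_right hs]
        push_cast at e1
        nlinarith [e1]
      · rw [max_eq_left hs]
        linarith

/-- The 4 × 4 grid with weights and dual values. -/
def grid : List (ℕ × ℕ × ℕ × ℕ) :=
  [(18, 0, 3, 22), (18, 3, 3, 22), (6, 0, 1, 15), (6, 3, 1, 15), (18, 1, 3, 15), (18, 2, 3, 15),
   (2, 0, 0, 9), (2, 3, 0, 9), (6, 1, 1, 7), (6, 2, 1, 7), (6, 0, 2, 6), (6, 1, 2, 6),
   (6, 2, 2, 6), (6, 3, 2, 6), (2, 1, 0, 4), (2, 2, 0, 4)]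

lemma chk_grid : chk grid 0 0 0 0 0 = true := by decide +kernel

lemma posSum_grid (a b : ℝ) : posSum a b grid ≤ 28 := by
  have h := chk_sound a b grid 0 0 0 0 0 chk_grid
  simpa using h

lemma posSum_nonneg (a b : ℝ) (l) : 0 ≤ posSum a b l := by
  induction l with
  | nil => simp [posSum]
  | cons p l ih =>
    obtain ⟨w, i, j, u⟩ := p
    simp only [posSum]
    positivity

/-- Weighted sum of values of a function on the grid. -/
def wSum (F : ℕ → ℕ → ℝ) : List (ℕ × ℕ × ℕ × ℕ) → ℝ
  | [] => 0
  | (w, i, j, _) :: l => w * F i j + wSum F l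

lemma wSum_ge {ι : Type*} (β : Finset ι) (A B : ι → ℝ) (F : ℕ → ℕ → ℝ)
    (hF : ∀ i j, ∃ c ∈ β, F i j = ((i : ℝ) - A c)^2 + ((j : ℝ) - B c)^2) (l) :
    (sumU l : ℝ) - ∑ c ∈ β, posSum (A c) (B c) l ≤ wSum F l := by
  induction l with
  | nil => simp [posSum, sumU, wSum]
  | cons p l ih =>
    obtain ⟨w, i, j, u⟩ := p
    simp only [posSum, sumU, wSum, Finset.sum_add_distrib]
    push_cast
    obtain ⟨c, hc, e⟩ := hF i j
    have h1 := Finset.single_le_sum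
      (f := fun c => max 0 ((u : ℝ) - w * (((i : ℝ) - A c)^2 + ((j : ℝ) - B c)^2)))
      (fun _ _ => le_max_left _ _) hc
    have h2 := le_max_right 0 ((u : ℝ) - w * (((i : ℝ) - A c)^2 + ((j : ℝ) - B c)^2))
    rw [← e] at h2
    rw [← e] at h1
    linarith

lemma wSum_grid {ι : Type*} (β : Finset ι) (hc : β.card ≤ 4) (A B : ι → ℝ) (F : ℕ → ℕ → ℝ)
    (hF : ∀ i j, ∃ c ∈ β, F i j = ((i : ℝ) - A c)^2 + ((j : ℝ) - B c)^2) :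
    56 ≤ wSum F grid := by
  have h := wSum_ge β A B F hF grid
  have h1 : ∑ c ∈ β, posSum (A c) (B c) grid ≤ β.card • (28 : ℝ) :=
    Finset.sum_le_card_nsmul _ _ _ fun c _ => posSum_grid _ _
  have h2 : (β.card : ℝ) ≤ 4 := by exact_mod_cast hc
  have h3 : (sumU grid : ℝ) = 168 := by norm_num [sumU, grid]
  rw [nsmul_eq_mul] at h1
  linarith

/-! ### Measure-theoretic part -/

@[simp] lemma pt_zero (a b : ℝ) : pt a b 0 = a := rfl
@[simp] lemma pt_one (a b : ℝ) : pt a b 1 = b := rfl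

lemma nsq (x c : E2) : ‖x - c‖^2 = (x 0 - c 0)^2 + (x 1 - c 1)^2 := by
  rw [EuclideanSpace.norm_sq_eq]
  simp [Fin.sum_univ_two]

/-- Horizontal shift. -/
def ex : Fin 4 → ℝ := ![0, 2/3, 0, 2/3]
/-- Vertical shift. -/
def ey : Fin 4 → ℝ := ![0, 0, 2/3, 2/3]

lemma ex0 : ex 0 = 0 := rfl
lemma ex1 : ex 1 = 2/3 := rfl
lemma ex2 : ex 2 = 0 := rfl
lemma ex3 : ex 3 = 2/3 := rfl
lemma ey0 : ey 0 = 0 := rfl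
lemma ey1 : ey 1 = 0 := rfl
lemma ey2 : ey 2 = 2/3 := rfl
lemma ey3 : ey 3 = 2/3 := rfl

lemma S_zero (i : Fin 4) (x : E2) : S i x 0 = x 0 / 3 + ex i := by
  fin_cases i <;> simp [S, ex]

lemma S_one (i : Fin 4) (x : E2) : S i x 1 = x 1 / 3 + ey i := by
  fin_cases i <;> simp [S, ey]

lemma pt_cont {f g : E2 → ℝ} (hf : Continuous f) (hg : Continuous g) :
    Continuous fun x => pt (f x) (g x) := by
  unfold pt
  refine (PiLp.continuous_toLp 2 _).comp ?_
  refine continuous_pi fun i => ?_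
  fin_cases i
  · simpa using hf
  · simpa using hg

lemma co_cont (i : Fin 2) : Continuous fun x : E2 => x i := by fun_prop

lemma S_cont (i : Fin 4) : Continuous (S i) := by
  have h0 := co_cont 0
  have h1 := co_cont 1
  fin_cases i <;> exact pt_cont (by fun_prop) (by fun_prop)

lemma int_eq {P : Measure E2} [IsProbabilityMeasure P] (hP : carpetEq P) (f : E2 → ℝ)
    (hf : Continuous f) (hi : Integrable f P) :
    ∫ x, f x ∂P = 1/8 * ∫ x, f (S 0 x) ∂P + 1/8 * ∫ x, f (S 1 x) ∂P
      + 3/8 * ∫ x, f (S 2 x) ∂P + 3/8 * ∫ x, f (S 3 x) ∂P := by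
  have hi' := hi
  unfold carpetEq at hP
  rw [hP] at hi'
  have h3 := integrable_add_measure.1 hi'
  have h2 := integrable_add_measure.1 h3.1
  have h1 := integrable_add_measure.1 h2.1
  have key : ∀ i, ∫ x, f x ∂(P.map (S i)) = ∫ x, f (S i x) ∂P := fun i =>
    integral_map (S_cont i).measurable.aemeasurable hf.aestronglyMeasurable
  conv_lhs => rw [hP]
  rw [integral_add_measure h3.1 h3.2, integral_add_measure h2.1 h2.2,
    integral_add_measure h1.1 h1.2]
  simp only [integral_smul_measure, key]
  simp

/-- Distance-like function of the coordinate `k` to `[0,1]`. -/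
def dk (k : Fin 2) (x : E2) : ℝ := max 0 (max (x k - 1) (- x k))

lemma dk_cont (k) : Continuous (dk k) := by
  have := co_cont k
  unfold dk
  fun_prop

lemma dk_S (k : Fin 2) (i : Fin 4) (x : E2) : dk k (S i x) ≤ dk k x / 3 := by
  have key : ∀ t e : ℝ, 0 ≤ e → e ≤ 2/3 →
      max 0 (max ((t/3 + e) - 1) (-(t/3 + e))) ≤ max 0 (max (t - 1) (-t)) / 3 := by
    intro t e h0 h1
    have a0 := le_max_left 0 (max (t - 1) (-t))
    have a1 := (le_max_left (t - 1) (-t)).trans (le_max_right 0 (max (t - 1) (-t)))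
    have a2 := (le_max_right (t - 1) (-t)).trans (le_max_right 0 (max (t - 1) (-t)))
    refine max_le (by linarith) (max_le (by linarith) (by linarith))
  unfold dk
  fin_cases k
  · simp only [Fin.zero_eta, S_zero]
    apply key <;> fin_cases i <;> norm_num [ex]
  · simp only [Fin.mk_one, S_one]
    apply key <;> fin_cases i <;> norm_num [ey]

lemma ae_dk {P : Measure E2} [IsProbabilityMeasure P] (hP : carpetEq P) (k : Fin 2) :
    ∀ᵐ x ∂P, dk k x = 0 := by
  have hnn : ∀ x, 0 ≤ dk k x := fun x => le_max_left _ _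
  have hc := dk_cont k
  have cont : ∀ g : E2 → ℝ, Continuous g → (∀ x, 0 ≤ g x) →
      Continuous (fun x => g x / (1 + g x)) := by
    intro g hg h0
    exact hg.div (by fun_prop) fun x => by have := h0 x; positivity
  have bdd : ∀ g : E2 → ℝ, Continuous g → (∀ x, 0 ≤ g x) →
      Integrable (fun x => g x / (1 + g x)) P := by
    intro g hg h0
    refine Integrable.of_bound (C := 1) (cont g hg h0).aestronglyMeasurable ?_
    refine Filter.Eventually.of_forall fun x => ?_
    have := h0 x
    rw [Real.norm_eq_abs, abs_of_nonneg (by positivity), div_le_one (by positivity)]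
    linarith
  have mono : ∀ s t : ℝ, 0 ≤ s → s ≤ t → s / (1 + s) ≤ t / (1 + t) := by
    intro s t h0 h
    rw [div_le_div_iff₀ (by linarith) (by linarith)]
    linarith
  have i1 := bdd _ hc hnn
  have i2 := bdd (fun x => dk k x / 3) (by fun_prop) (fun x => by have := hnn x; positivity)
  have hS : ∀ i, ∫ x, dk k (S i x) / (1 + dk k (S i x)) ∂P
      ≤ ∫ x, (dk k x / 3) / (1 + dk k x / 3) ∂P := by
    intro i
    refine integral_mono (bdd _ (hc.comp (S_cont i)) (fun x => hnn _)) i2 fun x => ?_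
    exact mono _ _ (hnn _) (dk_S k i x)
  have e := int_eq hP (fun x => dk k x / (1 + dk k x)) (cont _ hc hnn) i1
  have h0 := hS 0
  have h1 := hS 1
  have h2 := hS 2
  have h3 := hS 3
  have hle : ∫ x, (dk k x / (1 + dk k x) - (dk k x / 3) / (1 + dk k x / 3)) ∂P ≤ 0 := by
    rw [integral_sub i1 i2]
    linarith
  have hpos : ∀ x, 0 ≤ dk k x / (1 + dk k x) - (dk k x / 3) / (1 + dk k x / 3) := by
    intro x
    have := hnn x
    rw [sub_nonneg]
    exact mono _ _ (by positivity) (by linarith)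
  have hz := (integral_eq_zero_iff_of_nonneg hpos (i1.sub i2)).1
    (le_antisymm hle (integral_nonneg hpos))
  filter_upwards [hz] with x hx
  simp only [Pi.zero_apply] at hx
  have := hnn x
  rw [sub_eq_zero, div_eq_div_iff (by positivity) (by positivity)] at hx
  linarith

lemma ae_sq {P : Measure E2} [IsProbabilityMeasure P] (hP : carpetEq P) :
    ∀ᵐ x ∂P, (0 ≤ x 0 ∧ x 0 ≤ 1) ∧ (0 ≤ x 1 ∧ x 1 ≤ 1) := by
  have key : ∀ t : ℝ, max 0 (max (t - 1) (-t)) = 0 → 0 ≤ t ∧ t ≤ 1 := by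
    intro t h
    have a1 := (le_max_left (t - 1) (-t)).trans (le_max_right 0 (max (t - 1) (-t)))
    have a2 := (le_max_right (t - 1) (-t)).trans (le_max_right 0 (max (t - 1) (-t)))
    constructor <;> linarith
  filter_upwards [ae_dk hP 0, ae_dk hP 1] with x h0 h1
  exact ⟨key _ h0, key _ h1⟩

lemma integrable_of_cont {P : Measure E2} [IsProbabilityMeasure P] (hP : carpetEq P)
    (f : E2 → ℝ) (hf : Continuous f) : Integrable f P := by
  have hcomp : IsCompact ((fun p : ℝ × ℝ => pt p.1 p.2) '' (Set.Icc 0 1 ×ˢ Set.Icc 0 1)) := by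
    refine (isCompact_Icc.prod isCompact_Icc).image ?_
    unfold pt
    refine (PiLp.continuous_toLp 2 _).comp ?_
    refine continuous_pi fun i => ?_
    fin_cases i
    · simpa using continuous_fst
    · simpa using continuous_snd
  obtain ⟨C, hC⟩ := hcomp.exists_bound_of_continuousOn hf.continuousOn
  refine Integrable.of_bound (C := C) hf.aestronglyMeasurable ?_
  filter_upwards [ae_sq hP] with x hx
  refine hC x ⟨(x 0, x 1), ⟨⟨hx.1.1, hx.1.2⟩, ⟨hx.2.1, hx.2.2⟩⟩, ?_⟩
  ext i
  fin_cases i <;> simp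

/-- Expectation of a quadratic polynomial from the moments. -/
lemma int_poly {P : Measure E2} [IsProbabilityMeasure P] (hP : carpetEq P) (a b c d e f : ℝ) :
    ∫ x : E2, (a + b * x 0 + c * x 1 + d * (x 0 * x 1) + e * (x 0)^2 + f * (x 1)^2) ∂P
      = a + b * ∫ x : E2, x 0 ∂P + c * ∫ x : E2, x 1 ∂P + d * ∫ x : E2, x 0 * x 1 ∂P
        + e * ∫ x : E2, (x 0)^2 ∂P + f * ∫ x : E2, (x 1)^2 ∂P := by
  have c0 := co_cont 0
  have c1 := co_cont 1
  have I := integrable_of_cont hP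
  rw [integral_add (I _ (by fun_prop)) (I _ (by fun_prop)),
    integral_add (I _ (by fun_prop)) (I _ (by fun_prop)),
    integral_add (I _ (by fun_prop)) (I _ (by fun_prop)),
    integral_add (I _ (by fun_prop)) (I _ (by fun_prop)),
    integral_add (I _ (by fun_prop)) (I _ (by fun_prop))]
  simp only [integral_const_mul, integral_const]
  simp

lemma int_poly' {P : Measure E2} [IsProbabilityMeasure P] (hP : carpetEq P) (a b c d e f : ℝ)
    (g : E2 → ℝ)
    (hg : ∀ x, g x = a + b * x 0 + c * x 1 + d * (x 0 * x 1) + e * (x 0)^2 + f * (x 1)^2) :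
    ∫ x, g x ∂P
      = a + b * ∫ x : E2, x 0 ∂P + c * ∫ x : E2, x 1 ∂P + d * ∫ x : E2, x 0 * x 1 ∂P
        + e * ∫ x : E2, (x 0)^2 ∂P + f * ∫ x : E2, (x 1)^2 ∂P := by
  rw [← int_poly hP]
  exact integral_congr_ae (Filter.Eventually.of_forall hg)

lemma moments {P : Measure E2} [IsProbabilityMeasure P] (hP : carpetEq P) :
    ∫ x : E2, x 0 ∂P = 1/2 ∧ ∫ x : E2, x 1 ∂P = 3/4 ∧ ∫ x : E2, x 0 * x 1 ∂P = 3/8 ∧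
    ∫ x : E2, (x 0)^2 ∂P = 3/8 ∧ ∫ x : E2, (x 1)^2 ∂P = 21/32 := by
  have c0 := co_cont 0
  have c1 := co_cont 1
  have I := integrable_of_cont hP
  have J := int_poly' hP
  have E := int_eq hP
  have m0 : ∫ x : E2, x 0 ∂P = 1/2 := by
    have h := E (fun x => x 0) c0 (I _ c0)
    have k : ∀ i, ∫ x : E2, S i x 0 ∂P = _ := fun i =>
      J (ex i) (1/3) 0 0 0 0 (fun x => S i x 0) (fun x => by simp only [S_zero]; ring)
    simp only [k] at h
    norm_num [ex0, ex1, ex2, ex3, ey0, ey1, ey2, ey3] at h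
    linarith
  have m1 : ∫ x : E2, x 1 ∂P = 3/4 := by
    have h := E (fun x => x 1) c1 (I _ c1)
    have k : ∀ i, ∫ x : E2, S i x 1 ∂P = _ := fun i =>
      J (ey i) 0 (1/3) 0 0 0 (fun x => S i x 1) (fun x => by simp only [S_one]; ring)
    simp only [k] at h
    norm_num [ex0, ex1, ex2, ex3, ey0, ey1, ey2, ey3] at h
    linarith
  have m2 : ∫ x : E2, x 0 * x 1 ∂P = 3/8 := by
    have h := E (fun x => x 0 * x 1) (by fun_prop) (I _ (by fun_prop))
    have k : ∀ i, ∫ x : E2, S i x 0 * S i x 1 ∂P = _ := fun i =>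
      J (ex i * ey i) (ey i / 3) (ex i / 3) (1/9) 0 0 (fun x => S i x 0 * S i x 1)
        (fun x => by simp only [S_zero, S_one]; ring)
    simp only [k, m0, m1] at h
    norm_num [ex0, ex1, ex2, ex3, ey0, ey1, ey2, ey3] at h
    linarith
  have m3 : ∫ x : E2, (x 0)^2 ∂P = 3/8 := by
    have h := E (fun x => (x 0)^2) (by fun_prop) (I _ (by fun_prop))
    have k : ∀ i, ∫ x : E2, (S i x 0)^2 ∂P = _ := fun i =>
      J ((ex i)^2) (2 * ex i / 3) 0 0 (1/9) 0 (fun x => (S i x 0)^2)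
        (fun x => by simp only [S_zero]; ring)
    simp only [k, m0, m1] at h
    norm_num [ex0, ex1, ex2, ex3, ey0, ey1, ey2, ey3] at h
    linarith
  have m4 : ∫ x : E2, (x 1)^2 ∂P = 21/32 := by
    have h := E (fun x => (x 1)^2) (by fun_prop) (I _ (by fun_prop))
    have k : ∀ i, ∫ x : E2, (S i x 1)^2 ∂P = _ := fun i =>
      J ((ey i)^2) 0 (2 * ey i / 3) 0 0 (1/9) (fun x => (S i x 1)^2)
        (fun x => by simp only [S_one]; ring)
    simp only [k, m0, m1] at h
    norm_num [ex0, ex1, ex2, ex3, ey0, ey1, ey2, ey3] at h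
    linarith
  exact ⟨m0, m1, m2, m3, m4⟩

/-- On the cell `i` the integral is bounded below by the corner average. -/
lemma cell_bound {P : Measure E2} [IsProbabilityMeasure P] (hP : carpetEq P)
    (β : Finset E2) (hβ : β.Nonempty) (f : E2 → ℝ) (hf : Continuous f)
    (hfe : ∀ x, f x = β.inf' hβ (fun c => ‖x - c‖^2)) (i : Fin 4) :
    1/8 * f (pt (ex i) (ey i)) + 1/8 * f (pt (1/3 + ex i) (ey i))
      + 3/8 * f (pt (ex i) (1/3 + ey i)) + 3/8 * f (pt (1/3 + ex i) (1/3 + ey i)) - 7/288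
      ≤ ∫ x, f (S i x) ∂P := by
  obtain ⟨m0, m1, m2, m3, m4⟩ := moments hP
  have c0 := co_cont 0
  have c1 := co_cont 1
  have hle : ∀ x c, c ∈ β → f x ≤ (x 0 - c 0)^2 + (x 1 - c 1)^2 := by
    intro x c hc
    rw [hfe, ← nsq]
    exact Finset.inf'_le (fun c => ‖x - c‖^2) hc
  set A := f (pt (ex i) (ey i))
  set B := f (pt (1/3 + ex i) (ey i))
  set C := f (pt (ex i) (1/3 + ey i))
  set D := f (pt (1/3 + ex i) (1/3 + ey i))
  have e := int_poly' hP A (B - A - 1/9) (C - A - 1/9) (A + D - B - C) (1/9) (1/9)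
    (fun x : E2 => (1 - x 0) * (1 - x 1) * A + x 0 * (1 - x 1) * B + (1 - x 0) * x 1 * C
      + x 0 * x 1 * D - (x 0 * (1 - x 0) + x 1 * (1 - x 1)) / 9) (fun x => by ring)
  rw [m0, m1, m2, m3, m4] at e
  have hm : ∫ x : E2, ((1 - x 0) * (1 - x 1) * A + x 0 * (1 - x 1) * B + (1 - x 0) * x 1 * C
      + x 0 * x 1 * D - (x 0 * (1 - x 0) + x 1 * (1 - x 1)) / 9) ∂P ≤ ∫ x, f (S i x) ∂P := by
    refine integral_mono_ae (integrable_of_cont hP _ (by fun_prop))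
      (integrable_of_cont hP _ (hf.comp (S_cont i))) ?_
    filter_upwards [ae_sq hP] with x hx
    obtain ⟨⟨h1, h2⟩, h3, h4⟩ := hx
    obtain ⟨c, hc, hce⟩ := Finset.exists_mem_eq_inf' hβ (fun c => ‖S i x - c‖^2)
    have hA := hle (pt (ex i) (ey i)) c hc
    have hB := hle (pt (1/3 + ex i) (ey i)) c hc
    have hC := hle (pt (ex i) (1/3 + ey i)) c hc
    have hD := hle (pt (1/3 + ex i) (1/3 + ey i)) c hc
    simp only [pt_zero, pt_one] at hA hB hC hD
    rw [hfe, hce, nsq, S_zero, S_one]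
    have kA := mul_le_mul_of_nonneg_left hA (mul_nonneg (sub_nonneg.2 h2) (sub_nonneg.2 h4))
    have kB := mul_le_mul_of_nonneg_left hB (mul_nonneg h1 (sub_nonneg.2 h4))
    have kC := mul_le_mul_of_nonneg_left hC (mul_nonneg (sub_nonneg.2 h2) h3)
    have kD := mul_le_mul_of_nonneg_left hD (mul_nonneg h1 h3)
    have := add_le_add (add_le_add kA kB) (add_le_add kC kD)
    refine le_trans (sub_le_sub_right (le_trans (le_of_eq ?_) this) _) (le_of_eq ?_)
    · ring
    · ring
  rw [e] at hm
  linarith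

theorem optimal_four_means (P : Measure E2) [IsProbabilityMeasure P] (hP : carpetEq P) :
    (∫ x : E2, min (min (‖x - pt (1/6) (1/4)‖^2) (‖x - pt (5/6) (1/4)‖^2))
        (min (‖x - pt (1/6) (11/12)‖^2) (‖x - pt (5/6) (11/12)‖^2)) ∂P = 7/288)
    ∧ ∀ (β : Finset E2) (hβ : β.Nonempty), β.card ≤ 4 →
        7/288 ≤ ∫ x : E2, β.inf' hβ (fun c => ‖x - c‖^2) ∂P := by
  have c0 := co_cont 0
  have c1 := co_cont 1
  constructor
  · obtain ⟨m0, m1, m2, m3, m4⟩ := moments hP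
    set f : E2 → ℝ := fun x => min (min (‖x - pt (1/6) (1/4)‖^2) (‖x - pt (5/6) (1/4)‖^2))
        (min (‖x - pt (1/6) (11/12)‖^2) (‖x - pt (5/6) (11/12)‖^2)) with hfd
    have hf : Continuous f := by
      rw [hfd]
      fun_prop
    have hS : ∀ i, ∫ x, f (S i x) ∂P = 7/288 := by
      intro i
      have e := int_poly' hP ((1/4 + 9/16)/9) (-1/9) (-(3/2)/9) 0 (1/9) (1/9)
        (fun x : E2 => ((x 0 - 1/2)^2 + (x 1 - 3/4)^2)/9) (fun x => by ring)
      rw [m0, m1, m2, m3, m4] at e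
      have : ∫ x, f (S i x) ∂P = ∫ x : E2, ((x 0 - 1/2)^2 + (x 1 - 3/4)^2)/9 ∂P := by
        refine integral_congr_ae ?_
        filter_upwards [ae_sq hP] with x hx
        obtain ⟨⟨h1, h2⟩, h3, h4⟩ := hx
        rw [hfd]
        simp only [nsq, S_zero, S_one, pt_zero, pt_one]
        apply le_antisymm
        · fin_cases i <;> simp only [min_le_iff, ex, ey] <;> norm_num
          · left; left; nlinarith
          · left; right; nlinarith
          · right; left; nlinarith
          · right; right; nlinarith
        · fin_cases i <;> simp only [le_min_iff, ex, ey] <;> norm_num <;>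
            refine ⟨⟨?_, ?_⟩, ?_, ?_⟩ <;> nlinarith
      rw [this, e]
      norm_num
    rw [int_eq hP f hf (integrable_of_cont hP f hf), hS, hS, hS, hS]
    norm_num
  · intro β hβ hcard
    set f : E2 → ℝ := fun x => β.inf' hβ (fun c => ‖x - c‖^2) with hfd
    have hf : Continuous f := by
      rw [hfd]
      exact Continuous.finset_inf'_apply hβ (fun c _ => by fun_prop)
    have hb := cell_bound hP β hβ f hf (fun x => rfl)
    rw [int_eq hP f hf (integrable_of_cont hP f hf)]
    have hw := wSum_grid β hcard (fun c => 3 * c 0) (fun c => 3 * c 1)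
      (fun i j => 9 * f (pt (i/3) (j/3))) (by
        intro i j
        obtain ⟨c, hc, hce⟩ := Finset.exists_mem_eq_inf' hβ
          (fun c => ‖pt ((i:ℝ)/3) ((j:ℝ)/3) - c‖^2)
        refine ⟨c, hc, ?_⟩
        rw [hfd]
        simp only
        rw [hce, nsq, pt_zero, pt_one]
        ring)
    have b0 := hb 0
    have b1 := hb 1
    have b2 := hb 2
    have b3 := hb 3
    norm_num [ex0, ex1, ex2, ex3, ey0, ey1, ey2, ey3] at b0 b1 b2 b3
    norm_num [wSum, grid] at hw
    linarith
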